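/- Let k, q ≥ 1 with k ≤ |X|, and let P_0, P_1, …, P_q be database properties. Then for every integer d ≥ 1 and all unitaries U_1, …, U_{q−1} of the ℓ²-space with orthonormal basis indexed by X^k × Y^k × {1,…,d}: the operator norm ‖ P_q · cO^k · (U_{q−1} ⊗ 1) · cO^k ⋯ (U_1 ⊗ 1) · cO^k · (¬P_0) ‖ is at most Σ_{s=1}^{q} ⟦¬P_{s−1} → P_s⟧_k. Here all operators act on the ℓ²-space with basis indexed by X^k × Y^k × {1,…,d} × DB: each U_i acts on the first three factors, cO^k acts on the X^k × Y^k and DB factors, and the projections P_q and ¬P_0 act on the DB factor. -/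

import Mathlib

noncomputable section

/- `Ȳ = Y ∪ {⊥}` is modeled by `Option Y` (`⊥ = none`), databases by `X → Option Y`,
and `ℂ[DB]` by `EuclideanSpace ℂ (X → Option Y)`. -/

/-- matrix (in the computational basis) of the single-register unitary `Comp` -/
def compMat (Y : Type*) [Fintype Y] [DecidableEq Y] :
    Matrix (Option Y) (Option Y) ℂ :=
  Matrix.of fun u v =>
    match u, v with
    | none, none => 0
    | some _, none => ((Real.sqrt (Fintype.card Y) : ℝ) : ℂ)⁻¹
    | none, some _ => ((Real.sqrt (Fintype.card Y) : ℝ) : ℂ)⁻¹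
    | some a, some b => (if a = b then (1 : ℂ) else 0) - ((Fintype.card Y : ℕ) : ℂ)⁻¹

/-- matrix of the diagonal unitary `O_ŷ` associated to a character `ŷ` of `Y` -/
def oMat {Y : Type*} [Fintype Y] [DecidableEq Y] [AddCommGroup Y] (c : AddChar Y ℂ) :
    Matrix (Option Y) (Option Y) ℂ :=
  Matrix.diagonal fun u => Option.elim u 1 fun r => c r

/-- matrix of the single-register compressed oracle `cO_ŷ = Comp ∘ O_ŷ ∘ Comp` -/
def cOMat {Y : Type*} [Fintype Y] [DecidableEq Y] [AddCommGroup Y] (c : AddChar Y ℂ) :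
    Matrix (Option Y) (Option Y) ℂ :=
  compMat Y * oMat c * compMat Y

/-- a single-register operator (given by its matrix `m`) acting at register `x0` -/
def liftMat {X Y : Type*} [Fintype X] [DecidableEq X] [DecidableEq Y] (x0 : X)
    (m : Matrix (Option Y) (Option Y) ℂ) :
    Matrix (X → Option Y) (X → Option Y) ℂ :=
  Matrix.of fun D' D => if ∀ a, a ≠ x0 → D' a = D a then m (D' x0) (D x0) else 0

/-- matrix of `cO_{x,ŷ}`: the composition of `cO_{ŷ i}` acting at register `x i` -/
def cOparMat {X Y : Type*} [Fintype X] [DecidableEq X] [Fintype Y] [DecidableEq Y]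
    [AddCommGroup Y] {k : ℕ} (x : Fin k → X) (c : Fin k → AddChar Y ℂ) :
    Matrix (X → Option Y) (X → Option Y) ℂ :=
  (List.ofFn fun i : Fin k => liftMat (x i) (cOMat (c i))).prod

/-- matrix of the orthogonal projection onto `span{e_D : D ∈ P}` -/
def projMat {ι : Type*} [DecidableEq ι] (P : Set ι) : Matrix ι ι ℂ := by
  classical exact Matrix.of fun i j => if i = j ∧ i ∈ P then 1 else 0

/-- the (continuous linear) operator on `ℓ²` given by a matrix -/
def toOp {ι : Type*} [Fintype ι] [DecidableEq ι] (m : Matrix ι ι ℂ) :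
    EuclideanSpace ℂ ι →L[ℂ] EuclideanSpace ℂ ι :=
  LinearMap.toContinuousLinearMap (Matrix.toEuclideanLin m)

/-- `D|^x`: the set of databases that coincide with `D` outside of `x` -/
def agreeOff {X Y : Type*} {k : ℕ} (D : X → Option Y) (x : Fin k → X) :
    Set (X → Option Y) :=
  {D' | ∀ a : X, (∀ i, x i ≠ a) → D' a = D a}

/-- The quantum transition capacity `⟦P → P' | X₀⟧_k`: the supremum, over all `x ∈ X₀^k`
with pairwise distinct entries, all `k`-tuples `ŷ` of characters of `Y` and all databases `D`,
of `‖P'|_{D|^x} ∘ cO_{x,ŷ} ∘ P|_{D|^x}‖` (`0` if the range is empty). -/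
def qtc {X Y : Type*} [Fintype X] [DecidableEq X] [Fintype Y] [DecidableEq Y]
    [AddCommGroup Y] (P P' : Set (X → Option Y)) (k : ℕ) (X₀ : Set X) : ℝ :=
  sSup {v : ℝ | ∃ (x : Fin k → X) (c : Fin k → AddChar Y ℂ) (D : X → Option Y),
    Function.Injective x ∧ (∀ i, x i ∈ X₀) ∧
    v = ‖(toOp (projMat (P' ∩ agreeOff D x))).comp
          ((toOp (cOparMat x c)).comp (toOp (projMat (P ∩ agreeOff D x))))‖}

end

noncomputable section

/-- matrix of `Comp_DB`: `Comp` applied at every database register -/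
def compDBMat (X Y : Type*) [Fintype X] [Fintype Y] [DecidableEq Y] :
    Matrix (X → Option Y) (X → Option Y) ℂ :=
  Matrix.of fun D' D => ∏ a : X, compMat Y (D' a) (D a)

/-- the basis permutation underlying `Õ₀` (extended by the identity on the
`{1,…,d}` factor): `(x, y, w, D) ↦ (x, y', w, D)` with `y'_i = y_i + D (x_i)`
whenever `D (x_i) ∈ Y`, and `y'_i = y_i` when `D (x_i) = ⊥` -/
def shiftIdx {X Y : Type*} [AddCommGroup Y] {k d : ℕ}
    (p : ((Fin k → X) × (Fin k → Y) × Fin d) × (X → Option Y)) :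
    ((Fin k → X) × (Fin k → Y) × Fin d) × (X → Option Y) :=
  ⟨⟨p.1.1, fun i => (p.2 (p.1.1 i)).elim (p.1.2.1 i) (fun v => p.1.2.1 i + v), p.1.2.2⟩, p.2⟩

/-- matrix of `cO^k = (1 ⊗ Comp_DB) ∘ Õ₀ ∘ (1 ⊗ Comp_DB)`, acting on the
`X^k × Y^k` and `DB` factors (and as the identity on the `{1,…,d}` factor) -/
def cOkExtMat (X Y : Type*) [Fintype X] [DecidableEq X] [Fintype Y] [DecidableEq Y]
    [AddCommGroup Y] (k d : ℕ) :
    Matrix (((Fin k → X) × (Fin k → Y) × Fin d) × (X → Option Y))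
           (((Fin k → X) × (Fin k → Y) × Fin d) × (X → Option Y)) ℂ := by
  classical
  exact (Matrix.of fun p' p => if p'.1 = p.1 then compDBMat X Y p'.2 p.2 else 0)
      * (Matrix.of fun p' p => if p' = shiftIdx p then 1 else 0)
      * (Matrix.of fun p' p => if p'.1 = p.1 then compDBMat X Y p'.2 p.2 else 0)

/-- matrix of an operator on `ℓ²` -/
def matOf {ι : Type*} [Fintype ι] [DecidableEq ι]
    (A : EuclideanSpace ℂ ι →L[ℂ] EuclideanSpace ℂ ι) : Matrix ι ι ℂ :=
  Matrix.of fun i j =>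
    inner (𝕜 := ℂ) (EuclideanSpace.single i 1) (A (EuclideanSpace.single j 1))

/-- matrix of `A ⊗ 1`: an operator `A` on the first three factors, extended by the
identity on the `DB` factor -/
def uExtMat (X Y : Type*) [Fintype X] [DecidableEq X] [Fintype Y] [DecidableEq Y]
    (k d : ℕ)
    (A : EuclideanSpace ℂ ((Fin k → X) × (Fin k → Y) × Fin d) →L[ℂ]
         EuclideanSpace ℂ ((Fin k → X) × (Fin k → Y) × Fin d)) :
    Matrix (((Fin k → X) × (Fin k → Y) × Fin d) × (X → Option Y))
           (((Fin k → X) × (Fin k → Y) × Fin d) × (X → Option Y)) ℂ := by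
  classical
  exact Matrix.of fun p' p => if p'.2 = p.2 then matOf A p'.1 p.1 else 0

/-- matrix of a database-property projection acting on the `DB` factor -/
def projDBMat (X Y : Type*) [Fintype X] [DecidableEq X] [Fintype Y] [DecidableEq Y]
    (k d : ℕ) (P : Set (X → Option Y)) :
    Matrix (((Fin k → X) × (Fin k → Y) × Fin d) × (X → Option Y))
           (((Fin k → X) × (Fin k → Y) × Fin d) × (X → Option Y)) ℂ := by
  classical
  exact Matrix.of fun p' p => if p' = p ∧ p.2 ∈ P then 1 else 0

/-- `chainOp cO Us q = cO ∘ Us (q-1) ∘ cO ∘ ⋯ ∘ Us 1 ∘ cO` (with `q` copies of `cO`) -/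
def chainOp {V : Type*} [NormedAddCommGroup V] [NormedSpace ℂ V]
    (cO : V →L[ℂ] V) (Us : ℕ → V →L[ℂ] V) : ℕ → (V →L[ℂ] V)
  | 0 => ContinuousLinearMap.id ℂ V
  | 1 => cO
  | n + 2 => cO.comp ((Us (n + 1)).comp (chainOp cO Us (n + 1)))

/-!
Inserting `1 = P_s + (1 - P_s)` after the `s`-th query telescopes the chain: its part ending in
`P_q` is a sum over `s` of contractions multiplied with one query sandwiched as
`P_s · cO^k · ¬P_{s-1}`, so it suffices to bound each sandwiched query by its capacity.

Such a query is a convolution in the register `Y^k`, so a Fourier transform there block-diagonalises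
it into the operators `P_s · cO_{x,ŷ} · ¬P_{s-1}`. Repeated entries of `x` are merged by multiplying
their characters, and the tuple is refilled with trivial characters on unused registers, which is
where `k ≤ |X|` enters. For pairwise distinct entries `cO_{x,ŷ}` leaves `D` unchanged outside `x`,
hence is block diagonal over the sets `D|^x`, and the capacity bounds every block.
-/

lemma norm_mul_le_one {A : Type*} [NonUnitalSeminormedRing A] {a b : A} (ha : ‖a‖ ≤ 1)
    (hb : ‖b‖ ≤ 1) : ‖a * b‖ ≤ 1 :=
  (norm_mul_le a b).trans (mul_le_one₀ ha (norm_nonneg b) hb)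

section OperatorNorm

open Matrix
open scoped Matrix.Norms.L2Operator

variable {𝕜 l m n o : Type*} [RCLike 𝕜] [Fintype l] [Fintype m] [Fintype n] [Fintype o]
  [DecidableEq n] [DecidableEq o]

lemma norm_le_one_of_mem_unitary {E : Type*} [NormedAddCommGroup E]
    [InnerProductSpace 𝕜 E] [CompleteSpace E] {U : E →L[𝕜] E} (hU : U ∈ unitary (E →L[𝕜] E)) :
    ‖U‖ ≤ 1 :=
  U.opNorm_le_bound zero_le_one fun v =>
    ((ContinuousLinearMap.norm_map_of_mem_unitary hU v).trans (one_mul _).symm).le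

lemma l2_opNorm_diagonal_le_one {w : n → 𝕜} (hw : ∀ i, ‖w i‖ ≤ 1) : ‖diagonal w‖ ≤ 1 := by
  rw [l2_opNorm_diagonal]
  exact (pi_norm_le_iff_of_nonneg zero_le_one).2 hw

lemma l2_opNorm_le_one_of_conjTranspose_mul_self {W : Matrix m n 𝕜} (hW : Wᴴ * W = 1) :
    ‖W‖ ≤ 1 := by
  have hone : ‖(1 : Matrix n n 𝕜)‖ ≤ 1 := l2_opNorm_diagonal_le_one fun _ => norm_one.le
  have hsq : ‖W‖ * ‖W‖ ≤ 1 := by rwa [← l2_opNorm_conjTranspose_mul_self, hW]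
  nlinarith [norm_nonneg W]

lemma l2_opNorm_le_of_intertwine [DecidableEq m] {W : Matrix m n 𝕜} {M : Matrix n n 𝕜}
    {B : Matrix m m 𝕜} (hW : Wᴴ * W = 1) (h : W * M = B * W) : ‖M‖ ≤ ‖B‖ := by
  have hW1 := l2_opNorm_le_one_of_conjTranspose_mul_self hW
  calc ‖M‖ = ‖Wᴴ * (B * W)‖ := by rw [← h, ← Matrix.mul_assoc, hW, Matrix.one_mul]
    _ ≤ ‖Wᴴ‖ * (‖B‖ * ‖W‖) := (l2_opNorm_mul _ _).trans (by gcongr; exact l2_opNorm_mul _ _)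
    _ ≤ 1 * (‖B‖ * 1) := by rw [l2_opNorm_conjTranspose]; gcongr
    _ = ‖B‖ := by ring

lemma l2_opNorm_submatrix_le (M : Matrix m n 𝕜) {r : l → m} {c : o → n}
    (hr : Function.Injective r) (hc : Function.Injective c) : ‖M.submatrix r c‖ ≤ ‖M‖ := by
  classical
  have hR : ‖(1 : Matrix m m 𝕜).submatrix r id‖ ≤ 1 := by
    rw [← l2_opNorm_conjTranspose]
    refine l2_opNorm_le_one_of_conjTranspose_mul_self ?_
    rw [conjTranspose_conjTranspose, conjTranspose_submatrix, conjTranspose_one,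
      ← submatrix_mul _ _ _ _ _ Function.bijective_id, Matrix.one_mul, submatrix_one _ hr]
  have hC : ‖(1 : Matrix n n 𝕜).submatrix id c‖ ≤ 1 := by
    refine l2_opNorm_le_one_of_conjTranspose_mul_self ?_
    rw [conjTranspose_submatrix, conjTranspose_one,
      ← submatrix_mul _ _ _ _ _ Function.bijective_id, Matrix.one_mul, submatrix_one _ hc]
  calc ‖M.submatrix r c‖
      = ‖(1 : Matrix m m 𝕜).submatrix r id * (M * (1 : Matrix n n 𝕜).submatrix id c)‖ := by
        congr 1
        ext i j
        simp [Matrix.mul_apply, Matrix.one_apply]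
    _ ≤ 1 * (‖M‖ * 1) := (l2_opNorm_mul _ _).trans <| by
        gcongr
        exact (l2_opNorm_mul _ _).trans (by gcongr)
    _ = ‖M‖ := by ring

lemma l2_opNorm_blockDiagonal_le {N : o → Matrix m n 𝕜} {C : ℝ} (hC : 0 ≤ C)
    (hN : ∀ b, ‖N b‖ ≤ C) : ‖blockDiagonal N‖ ≤ C := by
  rw [l2_opNorm_def]
  refine ContinuousLinearMap.opNorm_le_bound _ hC fun v => ?_
  let fiber (b : o) : EuclideanSpace 𝕜 n := WithLp.toLp 2 fun j => v (j, b)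
  have hv : ∑ b, ‖fiber b‖ ^ 2 = ‖v‖ ^ 2 := by
    simp only [EuclideanSpace.norm_sq_eq, Fintype.sum_prod_type_right, fiber]
  have hNv : ‖(toEuclideanLin (blockDiagonal N)) v‖ ^ 2
      = ∑ b, ‖(EuclideanSpace.equiv m 𝕜).symm (N b *ᵥ fiber b)‖ ^ 2 := by
    simp [EuclideanSpace.norm_sq_eq, Fintype.sum_prod_type_right, fiber, mulVec, dotProduct,
      blockDiagonal_apply]
  refine (sq_le_sq₀ (norm_nonneg _) (by positivity)).mp ?_
  calc ‖(toEuclideanLin (blockDiagonal N)) v‖ ^ 2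
      = ∑ b, ‖(EuclideanSpace.equiv m 𝕜).symm (N b *ᵥ fiber b)‖ ^ 2 := hNv
    _ ≤ ∑ b, (C * ‖fiber b‖) ^ 2 := by
        gcongr with b
        exact (l2_opNorm_mulVec _ _).trans (by gcongr; exact hN b)
    _ = (C * ‖v‖) ^ 2 := by simp only [mul_pow, ← Finset.mul_sum, hv]

end OperatorNorm

section BlockCirculant

open Matrix
open scoped Kronecker Matrix.Norms.L2Operator

variable {G n : Type*} [AddCommGroup G] [Fintype G] [Fintype n]

/-- The unitary discrete Fourier transform of a finite abelian group, as a matrix. -/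
def fourierMat (G : Type*) [AddCommGroup G] [Fintype G] : Matrix (AddChar G ℂ) G ℂ :=
  Matrix.of fun ψ g => ((Real.sqrt (Fintype.card G) : ℝ) : ℂ)⁻¹ * ψ g

/-- Convolution with the matrix-valued kernel `κ` on a group, as a matrix. -/
def blockCirculant (κ : G → Matrix n n ℂ) : Matrix (n × G) (n × G) ℂ :=
  Matrix.of fun p q => κ (p.2 - q.2) p.1 q.1

lemma inv_ofReal_sqrt_mul_self (N : ℕ) :
    ((Real.sqrt N : ℝ) : ℂ)⁻¹ * ((Real.sqrt N : ℝ) : ℂ)⁻¹ = (N : ℂ)⁻¹ := by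
  rw [← mul_inv, ← Complex.ofReal_mul, Real.mul_self_sqrt N.cast_nonneg, Complex.ofReal_natCast]

lemma fourierMat_conjTranspose_mul_self [DecidableEq G] :
    (fourierMat G)ᴴ * fourierMat G = 1 := by
  ext g h
  have hterm (ψ : AddChar G ℂ) : star (fourierMat G ψ g) * fourierMat G ψ h
      = (Fintype.card G : ℂ)⁻¹ * ψ (h - g) := by
    rw [← inv_ofReal_sqrt_mul_self, sub_eq_add_neg, AddChar.map_add_eq_mul,
      AddChar.map_neg_eq_conj]
    simp only [fourierMat, of_apply, star_mul', star_inv₀, RCLike.star_def, Complex.conj_ofReal]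
    ring
  simp only [mul_apply, conjTranspose_apply, hterm, ← Finset.mul_sum, AddChar.sum_apply_eq_ite,
    one_apply, sub_eq_zero, eq_comm (a := h)]
  split_ifs <;> simp

lemma one_kronecker_fourierMat_mul_blockCirculant [DecidableEq n] [DecidableEq (AddChar G ℂ)]
    (κ : G → Matrix n n ℂ) :
    ((1 : Matrix n n ℂ) ⊗ₖ fourierMat G) * blockCirculant κ
      = blockDiagonal (fun ψ : AddChar G ℂ => ∑ g, ψ g • κ g)
        * ((1 : Matrix n n ℂ) ⊗ₖ fourierMat G) := by
  ext ⟨i, ψ⟩ ⟨j, h⟩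
  calc (((1 : Matrix n n ℂ) ⊗ₖ fourierMat G) * blockCirculant κ) (i, ψ) (j, h)
      = ∑ g, fourierMat G ψ g * κ (g - h) i j := by
        simp [mul_apply, Fintype.sum_prod_type, one_apply, blockCirculant]
    _ = ∑ g, fourierMat G ψ (g + h) * κ g i j := by
        rw [← Equiv.sum_comp (Equiv.addRight h)]
        simp
    _ = ∑ g, ψ g * κ g i j * fourierMat G ψ h := by
        refine Finset.sum_congr rfl fun g _ => ?_
        simp only [fourierMat, of_apply, AddChar.map_add_eq_mul]
        ring
    _ = _ := by
        simp [mul_apply, Fintype.sum_prod_type, one_apply, blockDiagonal_apply, Matrix.sum_apply,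
          Finset.sum_mul]

lemma l2_opNorm_blockCirculant_le [DecidableEq G] [DecidableEq n] {κ : G → Matrix n n ℂ} {C : ℝ}
    (hC : 0 ≤ C) (hκ : ∀ ψ : AddChar G ℂ, ‖∑ g, ψ g • κ g‖ ≤ C) :
    ‖blockCirculant κ‖ ≤ C := by
  classical
  refine (l2_opNorm_le_of_intertwine ?_ (one_kronecker_fourierMat_mul_blockCirculant κ)).trans
    (l2_opNorm_blockDiagonal_le hC hκ)
  rw [conjTranspose_kronecker, ← mul_kronecker_mul, conjTranspose_one, Matrix.one_mul,
    fourierMat_conjTranspose_mul_self, one_kronecker_one]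

end BlockCirculant

section Projection

open Matrix
open scoped Matrix.Norms.L2Operator

variable {ι : Type*} [DecidableEq ι]

lemma projMat_eq_diagonal (P : Set ι) : projMat P = diagonal (P.indicator 1 : ι → ℂ) := by
  classical
  ext i j
  by_cases h : i = j
  · subst h; simp [projMat, Set.indicator_apply]
  · simp [projMat, h]

lemma projMat_add_compl (P : Set ι) : projMat P + projMat Pᶜ = 1 := by
  rw [projMat_eq_diagonal, projMat_eq_diagonal, diagonal_add, ← diagonal_one]
  exact congrArg _ (Set.indicator_self_add_compl P 1)

lemma l2_opNorm_projMat_le_one [Fintype ι] (P : Set ι) : ‖projMat P‖ ≤ 1 := by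
  rw [projMat_eq_diagonal]
  refine l2_opNorm_diagonal_le_one fun i => ?_
  by_cases h : i ∈ P <;> simp [h]

end Projection

section ToOp

open Matrix
open scoped Matrix.Norms.L2Operator

variable {ι : Type*} [Fintype ι] [DecidableEq ι]

lemma toOp_mul (m n : Matrix ι ι ℂ) : toOp (m * n) = (toOp m).comp (toOp n) :=
  map_mul (toEuclideanCLM (n := ι) (𝕜 := ℂ)) m n

lemma toOp_add (m n : Matrix ι ι ℂ) : toOp (m + n) = toOp m + toOp n :=
  map_add (toEuclideanCLM (n := ι) (𝕜 := ℂ)) m n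

lemma toOp_one : toOp (1 : Matrix ι ι ℂ) = 1 :=
  map_one (toEuclideanCLM (n := ι) (𝕜 := ℂ))

lemma norm_toOp (m : Matrix ι ι ℂ) : ‖toOp m‖ = ‖m‖ := l2_opNorm_toEuclideanCLM m

lemma toOp_matOf (A : EuclideanSpace ℂ ι →L[ℂ] EuclideanSpace ℂ ι) : toOp (matOf A) = A := by
  obtain ⟨m, rfl⟩ : ∃ m, toOp m = A := (toEuclideanCLM (n := ι) (𝕜 := ℂ)).surjective A
  refine congrArg toOp (Matrix.ext fun i j => ?_)
  have hcol : (toOp m (EuclideanSpace.single j 1)).ofLp = m *ᵥ Pi.single j 1 := rfl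
  simp [matOf, EuclideanSpace.inner_single_left, hcol]

end ToOp

section Tensor

open Matrix

variable {R X n : Type*} [CommSemiring R] [Fintype X] [DecidableEq X] [Fintype n] [DecidableEq n]

/-- The tensor product of the single-register operators `m a`, as a homomorphism in `m`. -/
def tensorMat : (X → Matrix n n R) →* Matrix (X → n) (X → n) R where
  toFun m := Matrix.of fun D' D => ∏ a, m a (D' a) (D a)
  map_one' := by
    ext D' D
    simp [one_apply, Finset.prod_ite_zero, funext_iff]
  map_mul' m m' := by
    ext D' D
    simp only [mul_apply, of_apply, Pi.mul_apply, ← Finset.prod_mul_distrib,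
      Finset.prod_univ_sum, Fintype.piFinset_univ]

lemma tensorMat_apply (m : X → Matrix n n R) (D' D : X → n) :
    tensorMat m D' D = ∏ a, m a (D' a) (D a) := rfl

lemma conjTranspose_tensorMat [StarRing R] (m : X → Matrix n n R) :
    (tensorMat m)ᴴ = tensorMat fun a => (m a)ᴴ := by
  ext D' D
  simp [tensorMat_apply, conjTranspose_apply, star_prod]

lemma tensorMat_diagonal (w : X → n → R) :
    tensorMat (fun a => diagonal (w a)) = diagonal fun D => ∏ a, w a (D a) := by
  ext D' D
  simp [tensorMat_apply, diagonal_apply, Finset.prod_ite_zero, funext_iff]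

lemma tensorMat_apply_eq_zero {m : X → Matrix n n R} {a : X} (ha : m a = 1) {D' D : X → n}
    (h : D' a ≠ D a) : tensorMat m D' D = 0 :=
  Finset.prod_eq_zero (Finset.mem_univ a) (by rw [ha, one_apply_ne h])

end Tensor

section Registers

variable {ι X M : Type*} [Fintype ι] [CommMonoid M]

lemma exists_injective_range_subset [Fintype X] (hcard : Fintype.card ι ≤ Fintype.card X)
    (x : ι → X) : ∃ x' : ι → X, Function.Injective x' ∧ Set.range x ⊆ Set.range x' := by
  classical
  obtain ⟨t, hxt, ht⟩ := Finset.exists_superset_card_eq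
    (Finset.card_image_le (s := Finset.univ) (f := x)) hcard
  let e : ι ≃ t := Fintype.equivOfCardEq (by simpa using ht.symm)
  refine ⟨fun i => e i, Subtype.val_injective.comp e.injective, ?_⟩
  rintro _ ⟨i, rfl⟩
  exact ⟨e.symm ⟨x i, hxt (Finset.mem_image_of_mem x (Finset.mem_univ i))⟩, by simp⟩

variable [DecidableEq X]

/-- The elements `c i` placed at the registers `x i`: where several `x i` coincide the
corresponding `c i` are multiplied, and registers outside the range of `x` carry `1`. -/
def registerProd (x : ι → X) (c : ι → M) : X → M :=
  ∏ i, Pi.mulSingle (x i) (c i)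

lemma registerProd_of_forall_ne {x : ι → X} {a : X} (ha : ∀ i, x i ≠ a) (c : ι → M) :
    registerProd x c a = 1 := by
  rw [registerProd, Finset.prod_apply]
  exact Finset.prod_eq_one fun i _ => Pi.mulSingle_eq_of_ne (ha i).symm _

lemma registerProd_apply_of_injective {x : ι → X} (hx : Function.Injective x) (c : ι → M) (i : ι) :
    registerProd x c (x i) = c i := by
  rw [registerProd, Finset.prod_apply, Fintype.prod_eq_single i, Pi.mulSingle_eq_same]
  exact fun j hj => Pi.mulSingle_eq_of_ne (hx.ne hj.symm) _

lemma exists_injective_registerProd_eq [Fintype X] (hcard : Fintype.card ι ≤ Fintype.card X)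
    (x : ι → X) (c : ι → M) :
    ∃ (x' : ι → X) (c' : ι → M), Function.Injective x' ∧
      registerProd x' c' = registerProd x c := by
  obtain ⟨x', hx', hrange⟩ := exists_injective_range_subset hcard x
  refine ⟨x', registerProd x c ∘ x', hx', funext fun a => ?_⟩
  by_cases ha : ∃ i, x' i = a
  · obtain ⟨i, rfl⟩ := ha
    exact registerProd_apply_of_injective hx' _ i
  · push Not at ha
    rw [registerProd_of_forall_ne ha, registerProd_of_forall_ne]
    intro i hi
    obtain ⟨j, hj⟩ := hrange ⟨i, hi⟩
    exact ha j hj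

end Registers

section Answers

variable {X Y : Type*} [AddCommGroup Y] {k : ℕ}

/-- The answers of `D` to the queries `x`, as the shift they cause on `Y^k`; in particular `⊥`
is read as `0`. -/
def answer (x : Fin k → X) (D : X → Option Y) : Fin k → Y :=
  fun i => (D (x i)).getD 0

lemma prod_registerProd_elim [Fintype X] [DecidableEq X] (x : Fin k → X) (c : Fin k → AddChar Y ℂ)
    (D : X → Option Y) :
    ∏ a, (D a).elim 1 (fun r => registerProd x c a r) = ∏ i, c i (answer x D i) := by
  have helim (a : X) : (D a).elim 1 (fun r => registerProd x c a r)
      = ∏ i, (Pi.mulSingle (x i) (c i) : X → AddChar Y ℂ) a ((D a).getD 0) := by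
    cases D a <;> simp [registerProd, Finset.prod_apply, AddChar.prod_apply]
  rw [Finset.prod_congr rfl fun a _ => helim a, Finset.prod_comm]
  refine Finset.prod_congr rfl fun i _ => ?_
  rw [Fintype.prod_eq_single (x i), Pi.mulSingle_eq_same, answer]
  exact fun a ha => by rw [Pi.mulSingle_eq_of_ne ha, AddChar.one_apply]

lemma shiftIdx_mk {d : ℕ} (x : Fin k → X) (y : Fin k → Y) (w : Fin d)
    (D : X → Option Y) :
    shiftIdx ((x, y, w), D) = ((x, y + answer x D, w), D) := by
  have hy : (fun i => (D (x i)).elim (y i) fun v => y i + v) = y + answer x D := by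
    funext i
    rw [Pi.add_apply, answer]
    cases D (x i) <;> simp
  simp only [shiftIdx, hy]

end Answers

section CompressedOracle

open Matrix
open scoped Matrix.Norms.L2Operator

section SingleRegister

variable {Y : Type*} [Fintype Y] [DecidableEq Y]

lemma compMat_conjTranspose : (compMat Y)ᴴ = compMat Y := by
  ext u v
  cases u <;> cases v <;> simp [compMat, conjTranspose_apply, eq_comm, apply_ite (star (R := ℂ))]

lemma compMat_mul_self [Nonempty Y] : compMat Y * compMat Y = 1 := by
  have hM : (Fintype.card Y : ℂ) ≠ 0 := Nat.cast_ne_zero.2 Fintype.card_ne_zero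
  have hcancel (a : ℂ) : Fintype.card Y * (a * (Fintype.card Y : ℂ)⁻¹) = a := by
    rw [mul_left_comm, mul_inv_cancel₀ hM, mul_one]
  ext u v
  rw [mul_apply, Fintype.sum_option]
  cases u <;> cases v <;>
    simp [compMat, inv_ofReal_sqrt_mul_self, hM, hcancel, sub_mul, mul_sub,
      Finset.sum_sub_distrib, one_apply]

variable [AddCommGroup Y]

/-- The single-register compressed oracle as a homomorphism from the dual group. -/
def cOMatHom : AddChar Y ℂ →* Matrix (Option Y) (Option Y) ℂ where
  toFun := cOMat
  map_one' := by
    have hone : oMat (1 : AddChar Y ℂ) = 1 :=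
      diagonal_eq_one.2 (funext fun u => by cases u <;> rfl)
    rw [cOMat, hone, mul_one, compMat_mul_self]
  map_mul' c c' := by
    have hmul : oMat (c * c') = oMat c * oMat c' := by
      rw [oMat, oMat, oMat, diagonal_mul_diagonal]
      exact congrArg diagonal (funext fun u => by cases u <;> simp)
    calc cOMat (c * c') = compMat Y * oMat c * 1 * (oMat c' * compMat Y) := by
          rw [cOMat, hmul]; simp only [mul_assoc, mul_one]
      _ = cOMat c * cOMat c' := by
          rw [← compMat_mul_self, cOMat, cOMat]; simp only [mul_assoc]

end SingleRegister

variable {X Y : Type*} [Fintype X] [DecidableEq X] [Fintype Y] [DecidableEq Y]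

lemma compDBMat_eq_tensorMat : compDBMat X Y = tensorMat fun _ => compMat Y := rfl

lemma compDBMat_conjTranspose_mul_self [Nonempty Y] : (compDBMat X Y)ᴴ * compDBMat X Y = 1 := by
  rw [compDBMat_eq_tensorMat, conjTranspose_tensorMat, ← map_mul]
  simp only [compMat_conjTranspose]
  exact (congrArg tensorMat (funext fun _ => compMat_mul_self)).trans (map_one _)

lemma tensorMat_mulSingle (x : X) (m : Matrix (Option Y) (Option Y) ℂ) :
    tensorMat (Pi.mulSingle x m) = liftMat x m := by
  ext D' D
  simp only [liftMat, of_apply]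
  split_ifs with h
  · rw [tensorMat_apply, Fintype.prod_eq_single x, Pi.mulSingle_eq_same]
    exact fun a ha => by rw [Pi.mulSingle_eq_of_ne ha, h a ha, one_apply_eq]
  · push Not at h
    obtain ⟨a, ha, hD⟩ := h
    exact tensorMat_apply_eq_zero (by rw [Pi.mulSingle_eq_of_ne ha]) hD

variable [AddCommGroup Y] {k : ℕ}

lemma cOparMat_eq_tensorMat (x : Fin k → X) (c : Fin k → AddChar Y ℂ) :
    cOparMat x c = tensorMat (cOMatHom ∘ registerProd x c) := by
  have hlift (a : X) (e : AddChar Y ℂ) :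
      tensorMat (cOMatHom ∘ Pi.mulSingle a e) = liftMat a (cOMat e) := by
    rw [← tensorMat_mulSingle]
    exact congrArg tensorMat (funext fun b => Pi.apply_mulSingle (fun _ => cOMatHom)
      (fun _ => map_one cOMatHom) a e b)
  have hprod := map_list_prod
    ((tensorMat (R := ℂ) (X := X) (n := Option Y)).comp (cOMatHom.compLeft X))
    (List.ofFn fun i => (Pi.mulSingle (x i) (c i) : X → AddChar Y ℂ))
  rw [List.prod_ofFn, List.map_ofFn] at hprod
  rw [cOparMat]
  simp only [← hlift]
  exact hprod.symm

lemma exists_injective_cOparMat_eq (hk : k ≤ Fintype.card X) (x : Fin k → X)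
    (c : Fin k → AddChar Y ℂ) :
    ∃ (x' : Fin k → X) (c' : Fin k → AddChar Y ℂ), Function.Injective x' ∧
      cOparMat x' c' = cOparMat x c := by
  obtain ⟨x', c', hx', h⟩ := exists_injective_registerProd_eq (by simpa using hk) x c
  exact ⟨x', c', hx', by rw [cOparMat_eq_tensorMat, cOparMat_eq_tensorMat, h]⟩

lemma cOparMat_apply_eq_zero (x : Fin k → X) (c : Fin k → AddChar Y ℂ) {D' D : X → Option Y}
    {a : X} (ha : ∀ i, x i ≠ a) (h : D' a ≠ D a) : cOparMat x c D' D = 0 := by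
  rw [cOparMat_eq_tensorMat]
  refine tensorMat_apply_eq_zero ?_ h
  rw [Function.comp_apply, registerProd_of_forall_ne ha, map_one]

lemma cOparMat_eq_compDBMat_mul_diagonal_mul (x : Fin k → X) (c : Fin k → AddChar Y ℂ) :
    cOparMat x c
      = compDBMat X Y * diagonal (fun D => ∏ i, c i (answer x D i)) * compDBMat X Y := by
  simp only [← prod_registerProd_elim]
  rw [← tensorMat_diagonal fun a (u : Option Y) => u.elim 1 fun r => registerProd x c a r,
    compDBMat_eq_tensorMat, ← map_mul, ← map_mul, cOparMat_eq_tensorMat]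
  rfl

lemma l2_opNorm_cOparMat_le_one (x : Fin k → X) (c : Fin k → AddChar Y ℂ) :
    ‖cOparMat x c‖ ≤ 1 := by
  have hK : ‖compDBMat X Y‖ ≤ 1 :=
    l2_opNorm_le_one_of_conjTranspose_mul_self compDBMat_conjTranspose_mul_self
  have hdiag : ‖diagonal (fun D : X → Option Y => ∏ i, c i (answer x D i))‖ ≤ 1 :=
    l2_opNorm_diagonal_le_one fun D => by simp [norm_prod]
  rw [cOparMat_eq_compDBMat_mul_diagonal_mul]
  exact norm_mul_le_one (norm_mul_le_one hK hdiag) hK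

end CompressedOracle

section ParallelOracle

open Matrix
open scoped Kronecker Matrix.Norms.L2Operator

lemma submatrix_one_kronecker_mul_mul {σ τ ι κ m n R : Type*} [CommSemiring R] [Fintype σ]
    [DecidableEq σ] [Fintype τ] [DecidableEq τ] [Fintype ι] [Fintype κ] (A : Matrix m ι R)
    (M : Matrix (σ × ι) (τ × κ) R) (B : Matrix κ n R) (s : σ) (t : τ) :
    (((1 : Matrix σ σ R) ⊗ₖ A) * M * ((1 : Matrix τ τ R) ⊗ₖ B)).submatrix (Prod.mk s) (Prod.mk t)
      = A * M.submatrix (Prod.mk s) (Prod.mk t) * B := by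
  ext i j
  simp [mul_apply, Fintype.sum_prod_type, one_apply]

section Reindexing

variable {X Y : Type*} {k d : ℕ}

/-- Regroups an index of `X^k × Y^k × {1,…,d} × DB` so that `(x, w)` labels the blocks and
`Y^k` is the convolution variable. -/
def regroup (p : ((Fin k → X) × (Fin k → Y) × Fin d) × (X → Option Y)) :
    ((X → Option Y) × (Fin k → Y)) × ((Fin k → X) × Fin d) :=
  ((p.2, p.1.2.1), (p.1.1, p.1.2.2))

lemma regroup_injective : Function.Injective (regroup (X := X) (Y := Y) (k := k) (d := d)) := by
  rintro ⟨⟨x', y', w'⟩, D'⟩ ⟨⟨x, y, w⟩, D⟩ hp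
  simp_all [regroup]

variable [AddCommGroup Y]

/-- The `i`-th component of a character of `Y^k`. -/
def charComponent (ψ : AddChar (Fin k → Y) ℂ) (i : Fin k) : AddChar Y ℂ :=
  ψ.compAddMonoidHom (AddMonoidHom.single (fun _ => Y) i)

lemma prod_charComponent (ψ : AddChar (Fin k → Y) ℂ) (y : Fin k → Y) :
    ∏ i, charComponent ψ i (y i) = ψ y := by
  have h := map_prod ψ.toMonoidHom
    (fun i => Multiplicative.ofAdd (Pi.single i (y i) : Fin k → Y)) Finset.univ
  rw [← ofAdd_sum, Finset.univ_sum_single] at h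
  exact h.symm

/-- The permutation matrix of `Õ₀` (and the identity on the `{1,…,d}` factor). -/
def shiftMat (X Y : Type*) [Fintype X] [DecidableEq X] [DecidableEq Y] [AddCommGroup Y]
    (k d : ℕ) :
    Matrix (((Fin k → X) × (Fin k → Y) × Fin d) × (X → Option Y))
      (((Fin k → X) × (Fin k → Y) × Fin d) × (X → Option Y)) ℂ :=
  Matrix.of fun p' p => if p' = shiftIdx p then 1 else 0

lemma submatrix_shiftMat [Fintype X] [DecidableEq X] [DecidableEq Y] (x' x : Fin k → X)
    (y' y : Fin k → Y) (w' w : Fin d) :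
    (shiftMat X Y k d).submatrix (Prod.mk (x', y', w')) (Prod.mk (x, y, w))
      = if x' = x ∧ w' = w then diagonal fun D => if answer x D = y' - y then 1 else 0
        else 0 := by
  ext D' D
  rw [apply_ite (fun M : Matrix _ _ ℂ => M D' D)]
  simp only [shiftMat, shiftIdx_mk, submatrix_apply, of_apply, Prod.mk.injEq, diagonal_apply,
    Matrix.zero_apply, eq_sub_iff_add_eq']
  grind

end Reindexing

variable {X Y : Type*} [Fintype X] [DecidableEq X] [Fintype Y] [DecidableEq Y] {k d : ℕ}

lemma projDBMat_eq_projMat (P : Set (X → Option Y)) :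
    projDBMat X Y k d P = projMat (Prod.snd ⁻¹' P) := by
  ext p' p
  simp only [projDBMat, projMat, of_apply]
  grind

lemma projDBMat_eq_one_kronecker (P : Set (X → Option Y)) :
    projDBMat X Y k d P = 1 ⊗ₖ projMat P := by
  rw [projDBMat_eq_projMat, projMat_eq_diagonal, projMat_eq_diagonal, ← diagonal_one,
    diagonal_kronecker_diagonal]
  exact congrArg diagonal (funext fun p => (one_mul _).symm)

lemma uExtMat_eq_kronecker_one
    (A : EuclideanSpace ℂ ((Fin k → X) × (Fin k → Y) × Fin d) →L[ℂ]
      EuclideanSpace ℂ ((Fin k → X) × (Fin k → Y) × Fin d)) :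
    uExtMat X Y k d A = matOf A ⊗ₖ 1 := by
  ext ⟨s', D'⟩ ⟨s, D⟩
  simp [uExtMat, one_apply]

lemma l2_opNorm_uExtMat_le
    (A : EuclideanSpace ℂ ((Fin k → X) × (Fin k → Y) × Fin d) →L[ℂ]
      EuclideanSpace ℂ ((Fin k → X) × (Fin k → Y) × Fin d)) :
    ‖uExtMat X Y k d A‖ ≤ ‖A‖ := by
  rw [uExtMat_eq_kronecker_one, kronecker_one]
  refine l2_opNorm_blockDiagonal_le (norm_nonneg A) fun _ => ?_
  rw [← norm_toOp, toOp_matOf]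

variable [AddCommGroup Y]

/-- The part of a compressed query at `x` in which the answer is `g`. -/
def answerKernel (x : Fin k → X) (g : Fin k → Y) : Matrix (X → Option Y) (X → Option Y) ℂ :=
  compDBMat X Y * diagonal (fun D => if answer x D = g then 1 else 0) * compDBMat X Y

lemma sum_smul_answerKernel (x : Fin k → X) (ψ : AddChar (Fin k → Y) ℂ) :
    ∑ g, ψ g • answerKernel x g = cOparMat x (charComponent ψ) := by
  have hdiag : ∑ g, ψ g • diagonal (fun D : X → Option Y => if answer x D = g then (1 : ℂ) else 0)
      = diagonal fun D => ψ (answer x D) := by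
    ext D' D
    simp [Matrix.sum_apply, diagonal_apply]
  simp only [answerKernel, cOparMat_eq_compDBMat_mul_diagonal_mul, prod_charComponent, ← hdiag,
    Finset.mul_sum, Finset.sum_mul, mul_smul_comm, smul_mul_assoc]

lemma cOkExtMat_eq_mul_shiftMat_mul :
    cOkExtMat X Y k d = (1 ⊗ₖ compDBMat X Y) * shiftMat X Y k d * (1 ⊗ₖ compDBMat X Y) := by
  have hK : 1 ⊗ₖ compDBMat X Y = Matrix.of fun
      (p' p : ((Fin k → X) × (Fin k → Y) × Fin d) × (X → Option Y)) =>
      if p'.1 = p.1 then compDBMat X Y p'.2 p.2 else 0 := by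
    ext p' p
    simp [one_apply]
  rw [hK, cOkExtMat, shiftMat]

lemma submatrix_cOkExtMat (x' x : Fin k → X) (y' y : Fin k → Y) (w' w : Fin d) :
    (cOkExtMat X Y k d).submatrix (Prod.mk (x', y', w')) (Prod.mk (x, y, w))
      = if x' = x ∧ w' = w then answerKernel x (y' - y) else 0 := by
  rw [cOkExtMat_eq_mul_shiftMat_mul, submatrix_one_kronecker_mul_mul, submatrix_shiftMat]
  split_ifs <;> simp [answerKernel]

lemma one_kronecker_mul_cOkExtMat_mul_eq (A B : Matrix (X → Option Y) (X → Option Y) ℂ) :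
    (1 ⊗ₖ A) * cOkExtMat X Y k d * (1 ⊗ₖ B)
      = (blockDiagonal fun s : (Fin k → X) × Fin d =>
          blockCirculant fun g => A * answerKernel s.1 g * B).submatrix
              regroup regroup := by
  ext ⟨⟨x', y', w'⟩, D'⟩ ⟨⟨x, y, w⟩, D⟩
  refine (congr_fun₂ (submatrix_one_kronecker_mul_mul A (cOkExtMat X Y k d) B
    (x', y', w') (x, y, w)) D' D).trans ?_
  rw [submatrix_cOkExtMat]
  by_cases h : x' = x ∧ w' = w
  · obtain ⟨rfl, rfl⟩ := h
    simp [regroup, blockCirculant]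
  · simp [h, regroup, blockDiagonal_apply]

lemma l2_opNorm_one_kronecker_mul_cOkExtMat_mul_le {A B : Matrix (X → Option Y) (X → Option Y) ℂ}
    {C : ℝ} (hC : 0 ≤ C)
    (h : ∀ (x : Fin k → X) (c : Fin k → AddChar Y ℂ), ‖A * cOparMat x c * B‖ ≤ C) :
    ‖(1 ⊗ₖ A) * cOkExtMat X Y k d * (1 ⊗ₖ B)‖ ≤ C := by
  rw [one_kronecker_mul_cOkExtMat_mul_eq]
  refine (l2_opNorm_submatrix_le _ regroup_injective regroup_injective).trans
    (l2_opNorm_blockDiagonal_le hC fun s => l2_opNorm_blockCirculant_le hC fun ψ => ?_)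
  convert h s.1 (charComponent ψ) using 2
  simp only [← sum_smul_answerKernel, Finset.mul_sum, Finset.sum_mul, mul_smul_comm,
    smul_mul_assoc]

lemma l2_opNorm_cOkExtMat_le_one : ‖cOkExtMat X Y k d‖ ≤ 1 := by
  simpa using l2_opNorm_one_kronecker_mul_cOkExtMat_mul_le (X := X) (Y := Y) (k := k) (d := d)
    (A := 1) (B := 1) zero_le_one (by simpa using l2_opNorm_cOparMat_le_one)

end ParallelOracle

section Capacity

open Matrix
open scoped Matrix.Norms.L2Operator

variable {X Y : Type*} [DecidableEq X] {k : ℕ}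

/-- `D` with the registers `x` set to `⊥`: the canonical representative of `D|^x`. -/
def eraseAt (x : Fin k → X) (D : X → Option Y) : X → Option Y :=
  fun a => if ∃ i, x i = a then none else D a

lemma mem_agreeOff_eraseAt (x : Fin k → X) (D : X → Option Y) : D ∈ agreeOff (eraseAt x D) x :=
  fun a ha => by simp [eraseAt, ha]

lemma exists_ne_of_eraseAt_ne {x : Fin k → X} {D' D : X → Option Y}
    (h : eraseAt x D' ≠ eraseAt x D) : ∃ a, (∀ i, x i ≠ a) ∧ D' a ≠ D a := by
  obtain ⟨a, ha⟩ := Function.ne_iff.1 h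
  by_cases hx : ∃ i, x i = a
  · simp [eraseAt, hx] at ha
  · exact ⟨a, not_exists.1 hx, by simpa [eraseAt, hx] using ha⟩

variable [Fintype X] [Fintype Y] [DecidableEq Y] [AddCommGroup Y]

lemma projMat_mul_cOparMat_mul_projMat_eq (P P' : Set (X → Option Y)) (x : Fin k → X)
    (c : Fin k → AddChar Y ℂ) :
    projMat P' * cOparMat x c * projMat P
      = (blockDiagonal fun b : X → Option Y =>
          projMat (P' ∩ agreeOff b x) * cOparMat x c * projMat (P ∩ agreeOff b x)).submatrix
            (fun D => (D, eraseAt x D)) (fun D => (D, eraseAt x D)) := by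
  classical
  ext D' D
  rw [submatrix_apply, blockDiagonal_apply]
  simp only [projMat_eq_diagonal, mul_diagonal, diagonal_mul]
  split_ifs with h
  · have hD' := mem_agreeOff_eraseAt x D'
    have hD : D ∈ agreeOff (eraseAt x D') x := h ▸ mem_agreeOff_eraseAt x D
    simp [Set.indicator_apply, hD', hD]
  · obtain ⟨a, ha, hne⟩ := exists_ne_of_eraseAt_ne h
    simp [cOparMat_apply_eq_zero x c ha hne]

lemma le_qtc (P P' : Set (X → Option Y)) {x : Fin k → X} (hx : Function.Injective x)
    (c : Fin k → AddChar Y ℂ) (D : X → Option Y) :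
    ‖projMat (P' ∩ agreeOff D x) * cOparMat x c * projMat (P ∩ agreeOff D x)‖
      ≤ qtc P P' k Set.univ := by
  have hnorm (x : Fin k → X) (c : Fin k → AddChar Y ℂ) (D : X → Option Y) :
      ‖(toOp (projMat (P' ∩ agreeOff D x))).comp
          ((toOp (cOparMat x c)).comp (toOp (projMat (P ∩ agreeOff D x))))‖
        = ‖projMat (P' ∩ agreeOff D x) * cOparMat x c * projMat (P ∩ agreeOff D x)‖ := by
    rw [← toOp_mul, ← toOp_mul, norm_toOp, Matrix.mul_assoc]
  refine le_csSup ⟨1, ?_⟩ ⟨x, c, D, hx, fun _ => Set.mem_univ _, (hnorm x c D).symm⟩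
  rintro v ⟨x, c, D, -, -, rfl⟩
  rw [hnorm]
  exact norm_mul_le_one (norm_mul_le_one (l2_opNorm_projMat_le_one _)
    (l2_opNorm_cOparMat_le_one x c)) (l2_opNorm_projMat_le_one _)

lemma qtc_nonneg (P P' : Set (X → Option Y)) (k : ℕ) (X₀ : Set X) : 0 ≤ qtc P P' k X₀ :=
  Real.sSup_nonneg (by rintro v ⟨x, c, D, -, -, rfl⟩; exact norm_nonneg _)

lemma l2_opNorm_projMat_mul_cOparMat_mul_projMat_le (hk : k ≤ Fintype.card X)
    (P P' : Set (X → Option Y)) (x : Fin k → X) (c : Fin k → AddChar Y ℂ) :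
    ‖projMat P' * cOparMat x c * projMat P‖ ≤ qtc P P' k Set.univ := by
  obtain ⟨x', c', hx', h⟩ := exists_injective_cOparMat_eq hk x c
  have herase : Function.Injective fun D : X → Option Y => (D, eraseAt x' D) :=
    fun _ _ hD => congrArg Prod.fst hD
  rw [← h, projMat_mul_cOparMat_mul_projMat_eq]
  exact (l2_opNorm_submatrix_le _ herase herase).trans
    (l2_opNorm_blockDiagonal_le (qtc_nonneg _ _ _ _) (le_qtc P P' hx' c'))

end Capacity

section Chain

lemma norm_mul_mul_mul_le_add {A : Type*} [SeminormedRing A] {p p' r t u w i : A}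
    (hr : ‖r‖ ≤ 1) (ht : ‖t‖ ≤ 1) (hu : ‖u‖ ≤ 1) (hw : ‖w‖ ≤ 1) (hi : ‖i‖ ≤ 1)
    (hadd : p + p' = 1) (hcomm : Commute p u) :
    ‖r * (t * (u * w) * i)‖ ≤ ‖p * (w * i)‖ + ‖r * (t * p')‖ := by
  have hsplit : r * (t * (u * w) * i)
      = r * t * u * (p * (w * i)) + r * (t * p') * (u * w * i) :=
    calc r * (t * (u * w) * i) = r * t * (p + p') * (u * w * i) := by
          rw [hadd]; noncomm_ring
      _ = r * t * (p * u) * (w * i) + r * (t * p') * (u * w * i) := by noncomm_ring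
      _ = _ := by rw [hcomm.eq]; noncomm_ring
  have hleft : ‖r * t * u‖ ≤ 1 := norm_mul_le_one (norm_mul_le_one hr ht) hu
  have hright : ‖u * w * i‖ ≤ 1 := norm_mul_le_one (norm_mul_le_one hu hw) hi
  rw [hsplit]
  refine (norm_add_le _ _).trans (add_le_add ?_ ?_)
  · exact (norm_mul_le _ _).trans (mul_le_of_le_one_left (norm_nonneg _) hleft)
  · exact (norm_mul_le _ _).trans (mul_le_of_le_one_right (norm_nonneg _) hright)

variable {V : Type*} [NormedAddCommGroup V] [NormedSpace ℂ V] {T : V →L[ℂ] V}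
  {Us : ℕ → V →L[ℂ] V} {q : ℕ}

lemma chainOp_succ (hq : 1 ≤ q) : chainOp T Us (q + 1) = T * (Us q * chainOp T Us q) := by
  obtain ⟨n, rfl⟩ := Nat.exists_eq_add_of_le' hq
  rfl

lemma norm_chainOp_le_one (hq : 1 ≤ q) (hT : ‖T‖ ≤ 1) (hU : ∀ s, 1 ≤ s → s < q → ‖Us s‖ ≤ 1) :
    ‖chainOp T Us q‖ ≤ 1 := by
  induction q, hq using Nat.le_induction with
  | base => exact hT
  | succ q hq ih =>
    rw [chainOp_succ hq]
    exact norm_mul_le_one hT (norm_mul_le_one (hU q hq q.lt_succ_self)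
      (ih fun s hs hsq => hU s hs (hsq.trans q.lt_succ_self)))

lemma norm_mul_chainOp_mul_le_sum {p p' : ℕ → V →L[ℂ] V} (hq : 1 ≤ q) (hT : ‖T‖ ≤ 1)
    (hp : ∀ s, ‖p s‖ ≤ 1) (hp' : ‖p' 0‖ ≤ 1) (hadd : ∀ s, p s + p' s = 1)
    (hU : ∀ s, 1 ≤ s → s < q → ‖Us s‖ ≤ 1) (hcomm : ∀ s, Commute (p s) (Us s)) :
    ‖p q * (chainOp T Us q * p' 0)‖ ≤ ∑ s ∈ Finset.range q, ‖p (s + 1) * (T * p' s)‖ := by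
  induction q, hq using Nat.le_induction with
  | base => simp [chainOp]
  | succ q hq ih =>
    have hUlt : ∀ s, 1 ≤ s → s < q → ‖Us s‖ ≤ 1 :=
      fun s hs hsq => hU s hs (hsq.trans q.lt_succ_self)
    rw [chainOp_succ hq, Finset.sum_range_succ]
    exact (norm_mul_mul_mul_le_add (hp _) hT (hU q hq q.lt_succ_self)
      (norm_chainOp_le_one hq hT hUlt) hp' (hadd q) (hcomm q)).trans
      (add_le_add_left (ih hUlt) _)

end Chain

section Transition

open Matrix
open scoped Kronecker Matrix.Norms.L2Operator

variable {X Y : Type*} [Fintype X] [DecidableEq X] [Fintype Y] [DecidableEq Y] {k d : ℕ}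

lemma toOp_projDBMat_add_compl (P : Set (X → Option Y)) :
    toOp (projDBMat X Y k d P) + toOp (projDBMat X Y k d Pᶜ) = 1 := by
  rw [← toOp_add, projDBMat_eq_projMat, projDBMat_eq_projMat, Set.preimage_compl,
    projMat_add_compl, toOp_one]

lemma norm_toOp_projDBMat_le_one (P : Set (X → Option Y)) :
    ‖toOp (projDBMat X Y k d P)‖ ≤ 1 := by
  rw [norm_toOp, projDBMat_eq_projMat]
  exact l2_opNorm_projMat_le_one _

lemma commute_toOp_projDBMat_uExtMat (P : Set (X → Option Y))
    (A : EuclideanSpace ℂ ((Fin k → X) × (Fin k → Y) × Fin d) →L[ℂ]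
      EuclideanSpace ℂ ((Fin k → X) × (Fin k → Y) × Fin d)) :
    Commute (toOp (projDBMat X Y k d P)) (toOp (uExtMat X Y k d A)) := by
  refine (toOp_mul _ _).symm.trans (Eq.trans (congrArg toOp ?_) (toOp_mul _ _))
  rw [projDBMat_eq_one_kronecker, uExtMat_eq_kronecker_one, ← mul_kronecker_mul,
    ← mul_kronecker_mul, Matrix.one_mul, Matrix.mul_one, Matrix.one_mul, Matrix.mul_one]

lemma norm_toOp_projDBMat_mul_cOkExtMat_mul_le [AddCommGroup Y] (hk : k ≤ Fintype.card X)
    (P P' : Set (X → Option Y)) :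
    ‖toOp (projDBMat X Y k d P') * (toOp (cOkExtMat X Y k d) * toOp (projDBMat X Y k d P))‖
      ≤ qtc P P' k Set.univ := by
  have h := l2_opNorm_one_kronecker_mul_cOkExtMat_mul_le (d := d) (qtc_nonneg _ _ _ _)
    (l2_opNorm_projMat_mul_cOparMat_mul_projMat_le hk P P')
  rwa [← projDBMat_eq_one_kronecker, ← projDBMat_eq_one_kronecker, Matrix.mul_assoc, ← norm_toOp,
    toOp_mul, toOp_mul] at h

end Transition

theorem stmt_7_general {X Y : Type*} [Fintype X] [DecidableEq X]
    [Fintype Y] [DecidableEq Y] [AddCommGroup Y]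
    (k q d : ℕ) (hkX : k ≤ Fintype.card X) (hq : 1 ≤ q) (P : ℕ → Set (X → Option Y))
    (U : ℕ → (EuclideanSpace ℂ ((Fin k → X) × (Fin k → Y) × Fin d) →L[ℂ]
              EuclideanSpace ℂ ((Fin k → X) × (Fin k → Y) × Fin d)))
    (hU : ∀ i, 1 ≤ i → i < q → ‖U i‖ ≤ 1) :
    ‖(toOp (projDBMat X Y k d (P q))).comp
        ((chainOp (toOp (cOkExtMat X Y k d))
            (fun n => toOp (uExtMat X Y k d (U n))) q).comp
          (toOp (projDBMat X Y k d ((P 0)ᶜ))))‖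
      ≤ ∑ s ∈ Finset.range q, qtc ((P s)ᶜ) (P (s + 1)) k Set.univ := by
  have htelescope := norm_mul_chainOp_mul_le_sum
    (p := fun s => toOp (projDBMat X Y k d (P s)))
    (p' := fun s => toOp (projDBMat X Y k d (P s)ᶜ)) hq
    ((norm_toOp _).trans_le l2_opNorm_cOkExtMat_le_one)
    (fun s => norm_toOp_projDBMat_le_one _) (norm_toOp_projDBMat_le_one _)
    (fun s => toOp_projDBMat_add_compl _)
    (fun s hs hsq => (norm_toOp _).trans_le ((l2_opNorm_uExtMat_le (U s)).trans (hU s hs hsq)))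
    (fun s => commute_toOp_projDBMat_uExtMat _ _)
  exact htelescope.trans
    (Finset.sum_le_sum fun s _ => norm_toOp_projDBMat_mul_cOkExtMat_mul_le hkX _ _)

theorem stmt_7 {X Y : Type*} [Fintype X] [DecidableEq X] [Nonempty X]
    [Fintype Y] [DecidableEq Y] [AddCommGroup Y]
    (k q d : ℕ) (hk : 1 ≤ k) (hkX : k ≤ Fintype.card X) (hq : 1 ≤ q) (hd : 1 ≤ d)
    -- the database properties `P_0, P_1, …, P_q`
    (P : ℕ → Set (X → Option Y))
    -- the unitaries `U_1, …, U_{q-1}`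
    (U : ℕ → (EuclideanSpace ℂ ((Fin k → X) × (Fin k → Y) × Fin d) →L[ℂ]
              EuclideanSpace ℂ ((Fin k → X) × (Fin k → Y) × Fin d)))
    (hU : ∀ i, 1 ≤ i → i ≤ q - 1 →
      U i ∈ unitary (EuclideanSpace ℂ ((Fin k → X) × (Fin k → Y) × Fin d) →L[ℂ]
        EuclideanSpace ℂ ((Fin k → X) × (Fin k → Y) × Fin d))) :
    ‖(toOp (projDBMat X Y k d (P q))).comp
        ((chainOp (toOp (cOkExtMat X Y k d))
            (fun n => toOp (uExtMat X Y k d (U n))) q).comp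
          (toOp (projDBMat X Y k d ((P 0)ᶜ))))‖
      ≤ ∑ s ∈ Finset.range q, qtc ((P s)ᶜ) (P (s + 1)) k Set.univ :=
  stmt_7_general k q d hkX hq P U fun i hi hiq =>
    norm_le_one_of_mem_unitary (hU i hi (Nat.le_sub_one_of_lt hiq))

end
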